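/- arXiv:2305.04560 — 2 statements merged into one kernel-verified Lean document; each statement's English description precedes it below -/
import Mathlib

section
/- Law of gyrosines for the Log-Cholesky geometry: let P, Q, R ∈ L⁺_n be pairwise distinct, set p = ∥⊖_lt Q ⊕_lt R∥_L, q = ∥⊖_lt P ⊕_lt R∥_L, r = ∥⊖_lt P ⊕_lt Q∥_L (all nonzero), and let cos α = ⟨⊖_lt P ⊕_lt Q, ⊖_lt P ⊕_lt R⟩_L/(r·q), cos β = ⟨⊖_lt Q ⊕_lt P, ⊖_lt Q ⊕_lt R⟩_L/(r·p), cos γ = ⟨⊖_lt R ⊕_lt P, ⊖_lt R ⊕_lt Q⟩_L/(q·p) be the gyrocosines of the gyroangles at the vertices P, Q, R, with sin α = √(1 − cos²α) and similarly for β, γ. Then sin α / p = sin β / q = sin γ / r. (Theorem H.1 of the paper, the Law of SPD Gyrosines, for the Log-Cholesky metric in Cholesky-factor coordinates.) -/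
open Matrix

/-- `L⁺_n`: real lower triangular `n × n` matrices with positive diagonal entries. -/
def lowerPos {n : ℕ} (U : Matrix (Fin n) (Fin n) ℝ) : Prop :=
  (∀ i j : Fin n, i < j → U i j = 0) ∧ ∀ i : Fin n, 0 < U i i

/-- `⌊U⌋`: the strictly lower triangular part of `U`. -/
def slt {n : ℕ} (U : Matrix (Fin n) (Fin n) ℝ) : Matrix (Fin n) (Fin n) ℝ :=
  Matrix.of fun i j => if j < i then U i j else 0

/-- `𝔻(U)`: the diagonal matrix with the same diagonal as `U`. -/
def dlt {n : ℕ} (U : Matrix (Fin n) (Fin n) ℝ) : Matrix (Fin n) (Fin n) ℝ :=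
  Matrix.diagonal fun i => U i i

/-- The Log-Cholesky binary operation `U ⊕_lt V = ⌊U⌋ + ⌊V⌋ + 𝔻(U)𝔻(V)`. -/
def oplusLT {n : ℕ} (U V : Matrix (Fin n) (Fin n) ℝ) : Matrix (Fin n) (Fin n) ℝ :=
  slt U + slt V + dlt U * dlt V

/-- The Log-Cholesky inverse `⊖_lt U = −⌊U⌋ + 𝔻(U)⁻¹`. -/
noncomputable def negLT {n : ℕ} (U : Matrix (Fin n) (Fin n) ℝ) : Matrix (Fin n) (Fin n) ℝ :=
  -slt U + Matrix.diagonal fun i => (U i i)⁻¹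

/-- The Log-Cholesky scalar multiplication `t ⊗_lt U = t⌊U⌋ + 𝔻(U)^t`. -/
noncomputable def smulLT {n : ℕ} (t : ℝ) (U : Matrix (Fin n) (Fin n) ℝ) :
    Matrix (Fin n) (Fin n) ℝ :=
  t • slt U + Matrix.diagonal fun i => (U i i) ^ t

/-- The Log-Cholesky inner product
`⟨U,V⟩_L = ⟨⌊U⌋,⌊V⌋⟩_F + Σ_i log(U i i)·log(V i i)`. -/
noncomputable def innerL {n : ℕ} (U V : Matrix (Fin n) (Fin n) ℝ) : ℝ :=
  Matrix.trace ((slt U)ᵀ * slt V) + ∑ i : Fin n, Real.log (U i i) * Real.log (V i i)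

/-- The Log-Cholesky norm `∥U∥_L = ⟨U,U⟩_L^{1/2}`. -/
noncomputable def normL {n : ℕ} (U : Matrix (Fin n) (Fin n) ℝ) : ℝ :=
  Real.sqrt (innerL U U)

/-!
Taking logarithms of the diagonal entries turns `⊕_lt` into addition and `⟨·,·⟩_L` into a Euclidean
inner product. A gyrotriangle in `L⁺_n` thus becomes a Euclidean triangle with the same side lengths
and the same angles, to which the Euclidean law of sines applies.
-/

open EuclideanGeometry

section LogCholesky

variable {n : ℕ} {A B C U V : Matrix (Fin n) (Fin n) ℝ}

theorem lowerPos.diag_ne_zero (hU : lowerPos U) (i : Fin n) : U i i ≠ 0 :=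
  (hU.2 i).ne'

theorem lowerPos.ext (hU : lowerPos U) (hV : lowerPos V) (hslt : slt U = slt V)
    (hdiag : ∀ i, U i i = V i i) : U = V := by
  ext i j
  rcases lt_trichotomy j i with hji | rfl | hij
  · simpa [slt, hji] using congrFun₂ hslt i j
  · exact hdiag j
  · rw [hU.1 i j hij, hV.1 i j hij]

theorem slt_negLT (U : Matrix (Fin n) (Fin n) ℝ) : slt (negLT U) = -slt U := by
  ext i j
  by_cases hji : j < i
  · simp [slt, negLT, hji, hji.ne']
  · simp [slt, hji]

theorem slt_oplusLT (U V : Matrix (Fin n) (Fin n) ℝ) : slt (oplusLT U V) = slt U + slt V := by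
  ext i j
  by_cases hji : j < i
  · simp [slt, oplusLT, dlt, hji, hji.ne']
  · simp [slt, hji]

theorem negLT_apply_self (U : Matrix (Fin n) (Fin n) ℝ) (i : Fin n) :
    negLT U i i = (U i i)⁻¹ := by
  simp [negLT, slt]

theorem oplusLT_apply_self (U V : Matrix (Fin n) (Fin n) ℝ) (i : Fin n) :
    oplusLT U V i i = U i i * V i i := by
  simp [oplusLT, slt, dlt]

/-- The Log-Cholesky coordinates of `U`: the strictly lower triangular part `⌊U⌋` together with the
logarithms of the diagonal entries. The `L²` product makes `⟨·,·⟩_L` the inner product of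
coordinates; `⌊U⌋` is vectorized because Mathlib puts no default inner product on matrices. -/
noncomputable def logCoord (U : Matrix (Fin n) (Fin n) ℝ) :
    WithLp 2 (EuclideanSpace ℝ (Fin n × Fin n) × EuclideanSpace ℝ (Fin n)) :=
  WithLp.toLp 2 (WithLp.toLp 2 (vec (slt U)), WithLp.toLp 2 fun i => Real.log (U i i))

theorem logCoord_injOn : Set.InjOn logCoord {U : Matrix (Fin n) (Fin n) ℝ | lowerPos U} := by
  intro U hU V hV h
  obtain ⟨hslt, hlog⟩ :
      slt U = slt V ∧ (fun i => Real.log (U i i)) = fun i => Real.log (V i i) := by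
    simpa only [logCoord, (WithLp.toLp_injective 2).eq_iff, Prod.mk.injEq, vec_inj] using h
  exact hU.ext hV hslt fun i => Real.log_injOn_pos (hU.2 i) (hV.2 i) (congrFun hlog i)

theorem logCoord_negLT (U : Matrix (Fin n) (Fin n) ℝ) : logCoord (negLT U) = -logCoord U := by
  simp only [logCoord, slt_negLT, vec_neg, negLT_apply_self, Real.log_inv]
  rfl

theorem logCoord_oplusLT (hU : ∀ i, U i i ≠ 0) (hV : ∀ i, V i i ≠ 0) :
    logCoord (oplusLT U V) = logCoord U + logCoord V := by
  simp only [logCoord, slt_oplusLT, vec_add, oplusLT_apply_self, Real.log_mul (hU _) (hV _)]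
  rfl

theorem logCoord_negLT_oplusLT (hA : ∀ i, A i i ≠ 0) (hB : ∀ i, B i i ≠ 0) :
    logCoord (oplusLT (negLT A) B) = logCoord B - logCoord A := by
  have hnegA (i : Fin n) : negLT A i i ≠ 0 := by
    rw [negLT_apply_self]
    exact inv_ne_zero (hA i)
  rw [logCoord_oplusLT hnegA hB, logCoord_negLT, neg_add_eq_sub]

theorem innerL_eq_inner_logCoord (U V : Matrix (Fin n) (Fin n) ℝ) :
    innerL U V = inner ℝ (logCoord U) (logCoord V) := by
  simp only [innerL, logCoord, WithLp.prod_inner_apply, EuclideanSpace.inner_toLp_toLp,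
    star_trivial, ← vec_dotProduct_vec, dotProduct_comm (vec (slt V))]
  simp only [dotProduct, mul_comm]

theorem normL_eq_norm_logCoord (U : Matrix (Fin n) (Fin n) ℝ) : normL U = ‖logCoord U‖ := by
  rw [normL, innerL_eq_inner_logCoord, norm_eq_sqrt_real_inner]

theorem normL_negLT_oplusLT (hA : ∀ i, A i i ≠ 0) (hB : ∀ i, B i i ≠ 0) :
    normL (oplusLT (negLT A) B) = dist (logCoord A) (logCoord B) := by
  rw [normL_eq_norm_logCoord, logCoord_negLT_oplusLT hA hB, dist_eq_norm_sub']

theorem normL_negLT_oplusLT_comm (hA : ∀ i, A i i ≠ 0) (hB : ∀ i, B i i ≠ 0) :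
    normL (oplusLT (negLT A) B) = normL (oplusLT (negLT B) A) := by
  rw [normL_negLT_oplusLT hA hB, normL_negLT_oplusLT hB hA, dist_comm]

theorem gyrocosine_eq_cos_angle_logCoord (hA : ∀ i, A i i ≠ 0) (hB : ∀ i, B i i ≠ 0)
    (hC : ∀ i, C i i ≠ 0) :
    innerL (oplusLT (negLT A) B) (oplusLT (negLT A) C) /
        (normL (oplusLT (negLT A) B) * normL (oplusLT (negLT A) C)) =
      Real.cos (∠ (logCoord B) (logCoord A) (logCoord C)) := by
  rw [innerL_eq_inner_logCoord, normL_eq_norm_logCoord, normL_eq_norm_logCoord,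
    logCoord_negLT_oplusLT hA hB, logCoord_negLT_oplusLT hA hC, EuclideanGeometry.angle,
    vsub_eq_sub, vsub_eq_sub, InnerProductGeometry.cos_angle]

theorem gyrosine_eq_sin_angle_logCoord (hA : ∀ i, A i i ≠ 0) (hB : ∀ i, B i i ≠ 0)
    (hC : ∀ i, C i i ≠ 0) :
    Real.sqrt (1 - (innerL (oplusLT (negLT A) B) (oplusLT (negLT A) C) /
        (normL (oplusLT (negLT A) B) * normL (oplusLT (negLT A) C))) ^ 2) =
      Real.sin (∠ (logCoord B) (logCoord A) (logCoord C)) := by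
  rw [gyrocosine_eq_cos_angle_logCoord hA hB hC,
    Real.sin_eq_sqrt_one_sub_cos_sq (angle_nonneg _ _ _) (angle_le_pi _ _ _)]

end LogCholesky

/-- Law of gyrosines for the Log-Cholesky geometry: with
`p = ∥⊖_lt Q ⊕_lt R∥_L`, `q = ∥⊖_lt P ⊕_lt R∥_L`, `r = ∥⊖_lt P ⊕_lt Q∥_L`, the
gyrocosines `cos α`, `cos β`, `cos γ` of the gyroangles at the vertices `P`, `Q`, `R`,
and `sin = √(1 − cos²)`, one has `sin α / p = sin β / q = sin γ / r`. -/
theorem law_of_gyrosines_LC {n : ℕ} (P Q R : Matrix (Fin n) (Fin n) ℝ)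
    (hP : lowerPos P) (hQ : lowerPos Q) (hR : lowerPos R)
    (hPQ : P ≠ Q) (hPR : P ≠ R) (hQR : Q ≠ R) :
    Real.sqrt (1 - (innerL (oplusLT (negLT P) Q) (oplusLT (negLT P) R) /
          (normL (oplusLT (negLT P) Q) * normL (oplusLT (negLT P) R))) ^ 2) /
        normL (oplusLT (negLT Q) R) =
      Real.sqrt (1 - (innerL (oplusLT (negLT Q) P) (oplusLT (negLT Q) R) /
          (normL (oplusLT (negLT P) Q) * normL (oplusLT (negLT Q) R))) ^ 2) /
        normL (oplusLT (negLT P) R) ∧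
    Real.sqrt (1 - (innerL (oplusLT (negLT Q) P) (oplusLT (negLT Q) R) /
          (normL (oplusLT (negLT P) Q) * normL (oplusLT (negLT Q) R))) ^ 2) /
        normL (oplusLT (negLT P) R) =
      Real.sqrt (1 - (innerL (oplusLT (negLT R) P) (oplusLT (negLT R) Q) /
          (normL (oplusLT (negLT P) R) * normL (oplusLT (negLT Q) R))) ^ 2) /
        normL (oplusLT (negLT P) Q) := by
  have hP₀ := hP.diag_ne_zero
  have hQ₀ := hQ.diag_ne_zero
  have hR₀ := hR.diag_ne_zero
  have hPQ' : logCoord P ≠ logCoord Q := logCoord_injOn.ne hP hQ hPQ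
  have hPR' : logCoord P ≠ logCoord R := logCoord_injOn.ne hP hR hPR
  have hQR' : logCoord Q ≠ logCoord R := logCoord_injOn.ne hQ hR hQR
  have hα := gyrosine_eq_sin_angle_logCoord hP₀ hQ₀ hR₀
  have hβ := gyrosine_eq_sin_angle_logCoord hQ₀ hP₀ hR₀
  have hγ := gyrosine_eq_sin_angle_logCoord hR₀ hP₀ hQ₀
  rw [normL_negLT_oplusLT_comm hQ₀ hP₀] at hβ
  rw [normL_negLT_oplusLT_comm hR₀ hP₀, normL_negLT_oplusLT_comm hR₀ hQ₀] at hγ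
  rw [hα, hβ, hγ, normL_negLT_oplusLT hP₀ hQ₀, normL_negLT_oplusLT hP₀ hR₀,
    normL_negLT_oplusLT hQ₀ hR₀]
  constructor
  · rw [angle_comm (logCoord P), dist_comm (logCoord Q)]
    exact sin_angle_div_dist_eq_sin_angle_div_dist hPR' hQR'.symm
  · rw [angle_comm (logCoord P) (logCoord Q), dist_comm (logCoord P) (logCoord Q)]
    exact sin_angle_div_dist_eq_sin_angle_div_dist hPQ'.symm hPR'
end

section
/- Gyroangles are constant along gyrolines in the Log-Cholesky geometry: let P, Q, R ∈ L⁺_n with Q ≠ P and R ≠ P, let t > 0, and set S = P ⊕_lt (t ⊗_lt (⊖_lt P ⊕_lt Q)) (a point of the gyroline through P and Q). Then ⟨⊖_lt P ⊕_lt R, ⊖_lt P ⊕_lt S⟩_L / (∥⊖_lt P ⊕_lt R∥_L · ∥⊖_lt P ⊕_lt S∥_L) = ⟨⊖_lt P ⊕_lt R, ⊖_lt P ⊕_lt Q⟩_L / (∥⊖_lt P ⊕_lt R∥_L · ∥⊖_lt P ⊕_lt Q∥_L); i.e., the gyrocosine of the gyroangle ∠RPS equals that of ∠RPQ. (The Log-Cholesky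 instance of Lemma O.2 in the proof of Theorem 4.9 of the paper.) -/
/-!
The map `U ↦ (⌊U⌋, (log U i i)_i)` into a Euclidean space turns `t ⊗_lt ·` into multiplication
by `t`, and `⟨·,·⟩_L` is the pullback of the Euclidean inner product, so a gyrocosine is the cosine
of a Euclidean angle. By left cancellation `⊖P ⊕ S = t ⊗ (⊖P ⊕ Q)`, and rescaling a vector by
`t > 0` does not change the angles it makes.
-/

open Matrix

section Operations

variable {n : ℕ} (U V : Matrix (Fin n) (Fin n) ℝ)

@[simp]
lemma oplusLT_diag (i : Fin n) : oplusLT U V i i = U i i * V i i := by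
  simp [oplusLT, slt, dlt]

@[simp]
lemma negLT_diag (i : Fin n) : negLT U i i = (U i i)⁻¹ := by
  simp [negLT, slt]

@[simp]
lemma smulLT_diag (t : ℝ) (i : Fin n) : smulLT t U i i = U i i ^ t := by
  simp [smulLT, slt]

lemma oplusLT_apply_of_gt {i j : Fin n} (h : j < i) : oplusLT U V i j = U i j + V i j := by
  simp [oplusLT, slt, dlt, h, h.ne']

lemma negLT_apply_of_gt {i j : Fin n} (h : j < i) : negLT U i j = -U i j := by
  simp [negLT, slt, h, h.ne']

lemma smulLT_apply_of_gt (t : ℝ) {i j : Fin n} (h : j < i) : smulLT t U i j = t * U i j := by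
  simp [smulLT, slt, h, h.ne']

lemma oplusLT_apply_of_lt {i j : Fin n} (h : i < j) : oplusLT U V i j = 0 := by
  simp [oplusLT, slt, dlt, h.not_gt, h.ne]

lemma smulLT_apply_of_lt (t : ℝ) {i j : Fin n} (h : i < j) : smulLT t U i j = 0 := by
  simp [smulLT, slt, h.not_gt, h.ne]

lemma slt_smulLT (t : ℝ) : slt (smulLT t U) = t • slt U := by
  ext i j
  by_cases h : j < i
  · simp [slt, h, smulLT_apply_of_gt]
  · simp [slt, h]

variable {U V}

lemma negLT_oplusLT_cancel_left (hU : ∀ i, U i i ≠ 0) (hV : ∀ i j, i < j → V i j = 0) :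
    oplusLT (negLT U) (oplusLT U V) = V := by
  ext i j
  rcases lt_trichotomy i j with h | rfl | h
  · rw [oplusLT_apply_of_lt _ _ h, hV i j h]
  · rw [oplusLT_diag, oplusLT_diag, negLT_diag, inv_mul_cancel_left₀ (hU i)]
  · rw [oplusLT_apply_of_gt _ _ h, oplusLT_apply_of_gt _ _ h, negLT_apply_of_gt _ h,
      neg_add_cancel_left]

end Operations

section Coordinates

open InnerProductGeometry

variable {n : ℕ} (U V : Matrix (Fin n) (Fin n) ℝ)

/-- The Log-Cholesky coordinates `(⌊U⌋, (log U i i)_i)` of `U`, in which `⟨·,·⟩_L` is the Euclidean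
inner product. All entries of `⌊U⌋` are kept, those on and above the diagonal being `0`. -/
noncomputable def logCholesky :
    WithLp 2 (EuclideanSpace ℝ (Fin n × Fin n) × EuclideanSpace ℝ (Fin n)) :=
  WithLp.toLp 2 (WithLp.toLp 2 fun p => slt U p.1 p.2, WithLp.toLp 2 fun i => Real.log (U i i))

lemma inner_logCholesky : inner ℝ (logCholesky U) (logCholesky V) = innerL U V := by
  simp only [logCholesky, innerL, WithLp.prod_inner_apply, PiLp.inner_apply, RCLike.inner_apply,
    conj_trivial, Matrix.trace, Matrix.diag_apply, Matrix.mul_apply, Matrix.transpose_apply,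
    Fintype.sum_prod_type_right, mul_comm]

lemma norm_logCholesky : ‖logCholesky U‖ = normL U := by
  rw [norm_eq_sqrt_real_inner, inner_logCholesky, normL]

lemma cos_angle_logCholesky :
    Real.cos (angle (logCholesky U) (logCholesky V)) = innerL U V / (normL U * normL V) := by
  rw [cos_angle, inner_logCholesky, norm_logCholesky, norm_logCholesky]

variable {U}

lemma logCholesky_smulLT (hU : ∀ i, 0 < U i i) (t : ℝ) :
    logCholesky (smulLT t U) = t • logCholesky U := by
  simp only [logCholesky, slt_smulLT, smulLT_diag, Real.log_rpow (hU _)]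
  rfl

end Coordinates

/-- Gyroangles are constant along gyrolines in the Log-Cholesky
geometry: for `t > 0` and `S = P ⊕_lt (t ⊗_lt (⊖_lt P ⊕_lt Q))`, the gyrocosine of
the gyroangle `∠RPS` equals that of `∠RPQ`. -/
theorem gyroangle_along_gyroline_LC {n : ℕ} (P Q R : Matrix (Fin n) (Fin n) ℝ)
    (hP : lowerPos P) (hQ : lowerPos Q) (hR : lowerPos R)
    (hQP : Q ≠ P) (hRP : R ≠ P) (t : ℝ) (ht : 0 < t) :
    innerL (oplusLT (negLT P) R)
        (oplusLT (negLT P) (oplusLT P (smulLT t (oplusLT (negLT P) Q)))) /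
      (normL (oplusLT (negLT P) R) *
        normL (oplusLT (negLT P) (oplusLT P (smulLT t (oplusLT (negLT P) Q))))) =
    innerL (oplusLT (negLT P) R) (oplusLT (negLT P) Q) /
      (normL (oplusLT (negLT P) R) * normL (oplusLT (negLT P) Q)) := by
  have hcancel : oplusLT (negLT P) (oplusLT P (smulLT t (oplusLT (negLT P) Q))) =
      smulLT t (oplusLT (negLT P) Q) :=
    negLT_oplusLT_cancel_left (fun i => (hP.2 i).ne') fun _ _ => smulLT_apply_of_lt _ t
  have hpos (i : Fin n) : 0 < oplusLT (negLT P) Q i i := by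
    rw [oplusLT_diag, negLT_diag]
    exact mul_pos (inv_pos.2 (hP.2 i)) (hQ.2 i)
  rw [hcancel, ← cos_angle_logCholesky, ← cos_angle_logCholesky, logCholesky_smulLT hpos,
    InnerProductGeometry.angle_smul_right_of_pos _ _ ht]
end
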